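/- In the simplified model, the variance of the sum of squared pre-averaged observations satisfies lim_{n→∞} n^{1/2} · Var(Σ_{i=2}^m Ȳ_{i,m}²) = (4/c)(σ² ∫₀¹ Λ(u)Λ(1−u) du − τ²c² ∫₀¹ λ(u)λ(1−u) du)² + (2/c)(σ² + 2τ²c² ∫₀¹ λ(u)² du)². -/

import Mathlib

open MeasureTheory ProbabilityTheory Real

noncomputable section

/-- `Λ(u) = -∫₀ᵘ λ(v) dv`. -/
def bigLam (lam : ℝ → ℝ) (u : ℝ) : ℝ := -∫ v in (0:ℝ)..u, lam v

/-- A (normalized) pre-average function: piecewise Lipschitz on `[0,2]`,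
antisymmetric about `1`, and normalized. -/
structure IsPreAverageFn (lam : ℝ → ℝ) : Prop where
  piecewise_lipschitz : ∃ (N : ℕ) (t : ℕ → ℝ) (K : NNReal),
      0 < N ∧ t 0 = 0 ∧ t N = 2 ∧ (∀ i < N, t i < t (i + 1)) ∧
      ∀ i < N, LipschitzOnWith K lam (Set.Ioo (t i) (t (i + 1)))
  antisymm : ∀ t ∈ Set.Icc (0:ℝ) 1, lam t = - lam (2 - t)
  normalized : Real.sqrt (2 * ∫ s in (0:ℝ)..1, (∫ u in (0:ℝ)..s, lam u) ^ 2) = 1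

/-- `m = n / ⌊√n / c⌋`. -/
def mOf (c : ℝ) (n : ℕ) : ℕ := n / ⌊Real.sqrt n / c⌋₊

/-- The indices `j` with `j/n ∈ [(i-2)/m , i/m]`. -/
def blockIdx (n m i : ℕ) : Finset ℕ :=
  (Finset.range (n + 1)).filter fun j =>
    ((i : ℝ) - 2) / m ≤ (j : ℝ) / n ∧ (j : ℝ) / n ≤ (i : ℝ) / m

variable {Ω : Type*}

/-- Pre-averaged value `Ā_{i,m} = (m/n) ∑_{j/n ∈ [(i-2)/m, i/m]} λ(m j/n - (i-2)) A_j`. -/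
def preAvg (lam : ℝ → ℝ) (n m : ℕ) (A : ℕ → Ω → ℝ) (i : ℕ) (ω : Ω) : ℝ :=
  ((m : ℝ) / n) * ∑ j ∈ blockIdx n m i,
    lam ((m : ℝ) * j / n - ((i : ℝ) - 2)) * A j ω

/-- Bias correction `𝔟(λ, A)_{i,m}`. -/
def biasCorr (lam : ℝ → ℝ) (n m : ℕ) (A : ℕ → Ω → ℝ) (i : ℕ) (ω : Ω) : ℝ :=
  ((m : ℝ) ^ 2 / (2 * (n : ℝ) ^ 2)) * ∑ j ∈ (blockIdx n m i).filter (fun j => 1 ≤ j),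
    (lam ((m : ℝ) * j / n - ((i : ℝ) - 2))) ^ 2 * (A j ω - A (j - 1) ω) ^ 2

/-- The simplified model: `(W_{j/n})_j` and `(η_{j,n})_j` form a centered jointly Gaussian
family with `Cov(W_{j/n}, W_{l/n}) = min(j,l)/n`, `(η_{j,n})` standard Gaussian i.i.d.
and uncorrelated with the `W` grid values. -/
def IsSimplifiedModel [MeasureSpace Ω] (n : ℕ) (W η : ℕ → Ω → ℝ) : Prop :=
  (∀ j, Measurable (W j)) ∧ (∀ j, Measurable (η j)) ∧
  (∀ a b : ℕ → ℝ, ∃ v : NNReal,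
    Measure.map (fun ω => ∑ j ∈ Finset.range (n + 1), (a j * W j ω + b j * η j ω)) ℙ
      = gaussianReal 0 v) ∧
  (∀ j l, j ≤ n → l ≤ n → ∫ ω, W j ω * W l ω = (min j l : ℝ) / n) ∧
  (∀ j l, j ≤ n → l ≤ n → ∫ ω, η j ω * η l ω = if j = l then 1 else 0) ∧
  (∀ j l, j ≤ n → l ≤ n → ∫ ω, W j ω * η l ω = 0)

/-- The observations `Y_{j,n} = σ W_{j/n} + τ η_{j,n}`. -/
def obs (σ τ : ℝ) (W η : ℕ → Ω → ℝ) (j : ℕ) (ω : Ω) : ℝ := σ * W j ω + τ * η j ω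

end

/-!
For jointly Gaussian centered variables, Isserlis' theorem gives
`Var (∑ Xᵢ²) = 2 ∑ᵢ ∑ⱼ Cov(Xᵢ, Xⱼ)²`, so everything reduces to the covariances of the pre-averaged
observations. Writing `min j l = ∑ₖ 1[1 ≤ k ≤ j] 1[k ≤ l]` turns the Brownian part of the covariance
into a sum of products of tail sums of `λ`, that is, into a Riemann sum for the autocorrelation of
`Λ`, while the noise part is directly a Riemann sum for the autocorrelation of `λ`. For functions of
bounded variation a Riemann sum of mesh `δ` errs by at most `δ` times the variation, uniformly in
the shifts, so `m Cov(Ȳᵢ, Ȳⱼ) = φ (j - i) + O(m / n)` uniformly in `i, j`, where `φ p` is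
`σ² ∫ Λ(x) Λ(x - p) dx + τ² (m² / n) ∫ λ(x) λ(x - p) dx`. Since `φ` vanishes at lags `|p| ≥ 2`, the
covariance matrix is asymptotically tridiagonal Toeplitz, and `√n Var` tends to
`(2 / c) (φ(0)² + 2 φ(1)²)`, with `m² / n` replaced by `c²`.
-/

section GaussianMoments

lemma iteratedDeriv_add_two_mgf_gaussianReal (v : NNReal) (n : ℕ) (t : ℝ) :
    iteratedDeriv (n + 2) (mgf id (gaussianReal 0 v)) t =
      v * (t * iteratedDeriv (n + 1) (mgf id (gaussianReal 0 v)) t +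
        (n + 1) * iteratedDeriv n (mgf id (gaussianReal 0 v)) t) := by
  set M := mgf id (gaussianReal 0 v) with hM
  have hderiv (k : ℕ) (s : ℝ) : HasDerivAt (iteratedDeriv k M) (iteratedDeriv (k + 1) M s) s := by
    have hs : s ∈ interior (integrableExpSet id (gaussianReal 0 v)) := by simp
    simpa only [hM, iteratedDeriv_mgf hs (k + 1)] using hasDerivAt_iteratedDeriv_mgf hs k
  induction n generalizing t with
  | zero =>
    have hM₁ (s : ℝ) : HasDerivAt M (v * (s * M s)) s := by
      simp only [hM, mgf_id_gaussianReal, zero_mul, zero_add]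
      convert (((hasDerivAt_pow 2 s).const_mul (v : ℝ)).div_const 2).exp using 1
      push_cast
      ring
    have hM' : iteratedDeriv 1 M = fun s ↦ v * (s * M s) := by
      rw [iteratedDeriv_one]
      exact funext fun s ↦ (hM₁ s).deriv
    rw [iteratedDeriv_succ, hM', iteratedDeriv_zero,
      HasDerivAt.deriv (((hasDerivAt_id' t).fun_mul (hM₁ t)).const_mul (v : ℝ))]
    push_cast
    ring
  | succ n ih =>
    rw [iteratedDeriv_succ, show iteratedDeriv (n + 2) M = _ from funext ih, HasDerivAt.deriv
      ((((hasDerivAt_id' t).fun_mul (hderiv (n + 1) t)).fun_add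
        ((hderiv n t).const_mul (n + 1 : ℝ))).const_mul (v : ℝ))]
    push_cast
    simp only [ih]
    ring

lemma integral_pow_add_two_gaussianReal (v : NNReal) (n : ℕ) :
    ∫ x, x ^ (n + 2) ∂gaussianReal 0 v = (n + 1) * v * ∫ x, x ^ n ∂gaussianReal 0 v := by
  have hmoment (k : ℕ) :
      iteratedDeriv k (mgf id (gaussianReal 0 v)) 0 = ∫ x, x ^ k ∂gaussianReal 0 v :=
    iteratedDeriv_mgf_zero (by simp) k
  rw [← hmoment, ← hmoment, iteratedDeriv_add_two_mgf_gaussianReal]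
  ring

variable {Ω : Type*} {mΩ : MeasurableSpace Ω} {P : Measure Ω} {X Y : Ω → ℝ}

lemma integrable_pow_of_hasGaussianLaw (hX : HasGaussianLaw X P) (k : ℕ) :
    Integrable (fun ω ↦ X ω ^ k) P := by
  have := hX.isProbabilityMeasure
  refine (integrable_norm_iff (hX.aemeasurable.pow_const k).aestronglyMeasurable).mp ?_
  simpa using (hX.memLp (p := k) (by simp)).integrable_norm_pow'

lemma memLp_sq_of_hasGaussianLaw (hX : HasGaussianLaw X P) : MemLp (fun ω ↦ X ω ^ 2) 2 P := by
  rw [memLp_two_iff_integrable_sq (hX.aemeasurable.pow_const 2).aestronglyMeasurable]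
  simpa only [← pow_mul] using integrable_pow_of_hasGaussianLaw hX 4

lemma integral_pow_four_of_hasGaussianLaw (hX : HasGaussianLaw X P) (hX₀ : P[X] = 0) :
    ∫ ω, X ω ^ 4 ∂P = 3 * Var[X; P] ^ 2 := by
  have hlaw := hX.map_eq_gaussianReal
  rw [hX₀] at hlaw
  calc ∫ ω, X ω ^ 4 ∂P
    _ = ∫ x, x ^ 4 ∂gaussianReal 0 Var[X; P].toNNReal := by
      rw [← hlaw, integral_map hX.aemeasurable (by fun_prop)]
    _ = 3 * Var[X; P] ^ 2 := by
      rw [integral_pow_add_two_gaussianReal _ 2, integral_pow_add_two_gaussianReal _ 0,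
        Real.coe_toNNReal _ (variance_nonneg X P)]
      simp
      ring

lemma integral_sq_mul_sq_of_hasGaussianLaw (hXY : HasGaussianLaw (fun ω ↦ (X ω, Y ω)) P)
    (hX₀ : P[X] = 0) (hY₀ : P[Y] = 0) :
    ∫ ω, X ω ^ 2 * Y ω ^ 2 ∂P = Var[X; P] * Var[Y; P] + 2 * cov[X, Y; P] ^ 2 := by
  have := hXY.isProbabilityMeasure
  have hX := hXY.fst
  have hY := hXY.snd
  have hadd := hXY.fun_add
  have hsub := hXY.fun_sub
  have hadd₀ : ∫ ω, X ω + Y ω ∂P = 0 := by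
    rw [integral_add hX.integrable hY.integrable, hX₀, hY₀, add_zero]
  have hsub₀ : ∫ ω, X ω - Y ω ∂P = 0 := by
    rw [integral_sub hX.integrable hY.integrable, hX₀, hY₀, sub_zero]
  have hint {Z : Ω → ℝ} (hZ : HasGaussianLaw Z P) : Integrable (fun ω ↦ Z ω ^ 4) P :=
    integrable_pow_of_hasGaussianLaw hZ 4
  calc ∫ ω, X ω ^ 2 * Y ω ^ 2 ∂P
    _ = ∫ ω, 12⁻¹ * ((X ω + Y ω) ^ 4 + (X ω - Y ω) ^ 4 - 2 * X ω ^ 4 - 2 * Y ω ^ 4) ∂P := by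
      congr with ω
      ring
    _ = 12⁻¹ * ((∫ ω, (X ω + Y ω) ^ 4 ∂P) + (∫ ω, (X ω - Y ω) ^ 4 ∂P) -
          2 * (∫ ω, X ω ^ 4 ∂P) - 2 * ∫ ω, Y ω ^ 4 ∂P) := by
      have hsum := (hint hadd).fun_add (hint hsub)
      have hX4 := (hint hX).const_mul 2
      have hdiff : Integrable (fun ω ↦ (X ω + Y ω) ^ 4 + (X ω - Y ω) ^ 4 - 2 * X ω ^ 4) P :=
        hsum.sub hX4
      rw [integral_const_mul, integral_sub hdiff ((hint hY).const_mul 2),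
        integral_sub hsum hX4, integral_add (hint hadd) (hint hsub), integral_const_mul,
        integral_const_mul]
    _ = Var[X; P] * Var[Y; P] + 2 * cov[X, Y; P] ^ 2 := by
      rw [integral_pow_four_of_hasGaussianLaw hadd hadd₀,
        integral_pow_four_of_hasGaussianLaw hsub hsub₀,
        integral_pow_four_of_hasGaussianLaw hX hX₀, integral_pow_four_of_hasGaussianLaw hY hY₀,
        variance_fun_add hX.memLp_two hY.memLp_two, variance_fun_sub hX.memLp_two hY.memLp_two]
      ring

lemma covariance_sq_sq_of_hasGaussianLaw (hXY : HasGaussianLaw (fun ω ↦ (X ω, Y ω)) P)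
    (hX₀ : P[X] = 0) (hY₀ : P[Y] = 0) :
    cov[fun ω ↦ X ω ^ 2, fun ω ↦ Y ω ^ 2; P] = 2 * cov[X, Y; P] ^ 2 := by
  have := hXY.isProbabilityMeasure
  rw [covariance_eq_sub (memLp_sq_of_hasGaussianLaw hXY.fst) (memLp_sq_of_hasGaussianLaw hXY.snd),
    ← variance_of_integral_eq_zero hXY.fst.aemeasurable hX₀,
    ← variance_of_integral_eq_zero hXY.snd.aemeasurable hY₀]
  simp only [Pi.mul_apply, integral_sq_mul_sq_of_hasGaussianLaw hXY hX₀ hY₀]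
  ring

lemma variance_sum_sq_of_hasGaussianLaw {ι : Type*} {s : Finset ι} {X : ι → Ω → ℝ}
    (hX : ∀ i ∈ s, ∀ j ∈ s, HasGaussianLaw (fun ω ↦ (X i ω, X j ω)) P)
    (hX₀ : ∀ i ∈ s, P[X i] = 0) :
    Var[fun ω ↦ ∑ i ∈ s, X i ω ^ 2; P] = 2 * ∑ i ∈ s, ∑ j ∈ s, cov[X i, X j; P] ^ 2 := by
  rcases s.eq_empty_or_nonempty with rfl | ⟨i₀, hi₀⟩
  · simp only [Finset.sum_empty, mul_zero]
    exact variance_zero P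
  have := (hX i₀ hi₀ i₀ hi₀).isProbabilityMeasure
  rw [variance_fun_sum' fun i hi ↦ memLp_sq_of_hasGaussianLaw (hX i hi i hi).fst]
  simp only [Finset.mul_sum]
  exact Finset.sum_congr rfl fun i hi ↦ Finset.sum_congr rfl fun j hj ↦
    covariance_sq_sq_of_hasGaussianLaw (hX i hi j hj) (hX₀ i hi) (hX₀ j hj)

end GaussianMoments

section Model

variable {Ω : Type*}

lemma hasGaussianLaw_prodMk_of_forall_linearCombination {mΩ : MeasurableSpace Ω} {P : Measure Ω}
    {X Y : Ω → ℝ} (hX : AEMeasurable X P) (hY : AEMeasurable Y P)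
    (h : ∀ a b : ℝ, HasGaussianLaw (fun ω ↦ a * X ω + b * Y ω) P) :
    HasGaussianLaw (fun ω ↦ (X ω, Y ω)) P := by
  refine ⟨isGaussian_of_map_eq_gaussianReal fun L ↦ ?_⟩
  have hL : (fun ω ↦ L (X ω, Y ω)) = fun ω ↦ L (1, 0) * X ω + L (0, 1) * Y ω := by
    funext ω
    have : (X ω, Y ω) = X ω • ((1 : ℝ), (0 : ℝ)) + Y ω • ((0 : ℝ), (1 : ℝ)) := by simp
    rw [this, map_add, map_smul, map_smul]
    simp only [smul_eq_mul]
    ring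
  rw [AEMeasurable.map_map_of_aemeasurable (by fun_prop) (hX.prodMk hY)]
  exact ⟨_, _, (congrArg (Measure.map · P) hL).trans (h _ _).map_eq_gaussianReal⟩

lemma covariance_eq_integral_of_hasLaw_gaussianReal_zero {mΩ : MeasurableSpace Ω} {P : Measure Ω}
    {X Y : Ω → ℝ} {v v' : NNReal} (hX : HasLaw X (gaussianReal 0 v) P)
    (hY : HasLaw Y (gaussianReal 0 v') P) : cov[X, Y; P] = ∫ ω, X ω * Y ω ∂P := by
  have := hX.hasGaussianLaw.isProbabilityMeasure
  rw [covariance_eq_sub hX.hasGaussianLaw.memLp_two hY.hasGaussianLaw.memLp_two, hX.integral_eq,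
    integral_id_gaussianReal, zero_mul, sub_zero]
  rfl

variable [MeasureSpace Ω] {n : ℕ} {W η : ℕ → Ω → ℝ}

namespace IsSimplifiedModel

lemma hasLaw_sum (h : IsSimplifiedModel n W η) (a b : ℕ → ℝ) : ∃ v,
    HasLaw (fun ω ↦ ∑ j ∈ Finset.range (n + 1), (a j * W j ω + b j * η j ω))
      (gaussianReal 0 v) ℙ := by
  obtain ⟨hW, hη, hlaw, -⟩ := h
  obtain ⟨v, hv⟩ := hlaw a b
  exact ⟨v, by fun_prop, hv⟩

lemma hasLaw_signal (h : IsSimplifiedModel n W η) {j : ℕ} (hj : j ≤ n) :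
    ∃ v, HasLaw (W j) (gaussianReal 0 v) ℙ := by
  simpa [Pi.single_apply, hj, Nat.lt_succ_iff] using h.hasLaw_sum (Pi.single j 1) 0

lemma hasLaw_noise (h : IsSimplifiedModel n W η) {j : ℕ} (hj : j ≤ n) :
    ∃ v, HasLaw (η j) (gaussianReal 0 v) ℙ := by
  simpa [Pi.single_apply, hj, Nat.lt_succ_iff] using h.hasLaw_sum 0 (Pi.single j 1)

lemma hasLaw_sum_obs (h : IsSimplifiedModel n W η) (σ τ : ℝ) (w : ℕ → ℝ) : ∃ v,
    HasLaw (fun ω ↦ ∑ j ∈ Finset.range (n + 1), w j * obs σ τ W η j ω) (gaussianReal 0 v) ℙ := by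
  simpa only [obs, mul_add, mul_assoc] using h.hasLaw_sum (fun j ↦ w j * σ) (fun j ↦ w j * τ)

lemma integral_sum_obs (h : IsSimplifiedModel n W η) (σ τ : ℝ) (w : ℕ → ℝ) :
    ∫ ω, ∑ j ∈ Finset.range (n + 1), w j * obs σ τ W η j ω = 0 := by
  obtain ⟨v, hlaw⟩ := h.hasLaw_sum_obs σ τ w
  rw [hlaw.integral_eq, integral_id_gaussianReal]

lemma hasGaussianLaw_sum_obs_prodMk (h : IsSimplifiedModel n W η) (σ τ : ℝ) (w w' : ℕ → ℝ) :
    HasGaussianLaw (fun ω ↦ (∑ j ∈ Finset.range (n + 1), w j * obs σ τ W η j ω,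
      ∑ j ∈ Finset.range (n + 1), w' j * obs σ τ W η j ω)) ℙ := by
  obtain ⟨v, hw⟩ := h.hasLaw_sum_obs σ τ w
  obtain ⟨v', hw'⟩ := h.hasLaw_sum_obs σ τ w'
  refine hasGaussianLaw_prodMk_of_forall_linearCombination hw.aemeasurable hw'.aemeasurable
    fun a b ↦ ?_
  obtain ⟨u, hu⟩ := h.hasLaw_sum_obs σ τ fun j ↦ a * w j + b * w' j
  convert hu.hasGaussianLaw using 2 with ω
  rw [Finset.mul_sum, Finset.mul_sum, ← Finset.sum_add_distrib]
  exact Finset.sum_congr rfl fun j _ ↦ by ring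

lemma covariance_obs (h : IsSimplifiedModel n W η) (σ τ : ℝ) {j l : ℕ} (hj : j ≤ n)
    (hl : l ≤ n) :
    cov[obs σ τ W η j, obs σ τ W η l; ℙ] =
      σ ^ 2 * ((min j l : ℝ) / n) + τ ^ 2 * if j = l then 1 else 0 := by
  obtain ⟨_, hWj⟩ := h.hasLaw_signal hj
  obtain ⟨_, hWl⟩ := h.hasLaw_signal hl
  obtain ⟨_, hηj⟩ := h.hasLaw_noise hj
  obtain ⟨_, hηl⟩ := h.hasLaw_noise hl
  have memLp_smul {X : Ω → ℝ} {v : NNReal} (hX : HasLaw X (gaussianReal 0 v) ℙ) (a : ℝ) :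
      MemLp (a • X) 2 ℙ := hX.hasGaussianLaw.memLp_two.const_smul a
  have := hWj.hasGaussianLaw.isProbabilityMeasure
  have hsum := (memLp_smul hWl σ).add (memLp_smul hηl τ)
  obtain ⟨-, -, -, hWW, hηη, hWη⟩ := h
  have hobs (k : ℕ) : obs σ τ W η k = σ • W k + τ • η k := rfl
  rw [hobs, hobs, covariance_add_left (memLp_smul hWj σ) (memLp_smul hηj τ) hsum,
    covariance_add_right (memLp_smul hWj σ) (memLp_smul hWl σ) (memLp_smul hηl τ),
    covariance_add_right (memLp_smul hηj τ) (memLp_smul hWl σ) (memLp_smul hηl τ)]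
  simp only [covariance_smul_left, covariance_smul_right]
  rw [covariance_comm (η j) (W l), covariance_eq_integral_of_hasLaw_gaussianReal_zero hWj hWl,
    covariance_eq_integral_of_hasLaw_gaussianReal_zero hWj hηl,
    covariance_eq_integral_of_hasLaw_gaussianReal_zero hWl hηj,
    covariance_eq_integral_of_hasLaw_gaussianReal_zero hηj hηl,
    hWW j l hj hl, hηη j l hj hl, hWη j l hj hl, hWη l j hl hj]
  ring

lemma covariance_sum_obs (h : IsSimplifiedModel n W η) (σ τ : ℝ) (w w' : ℕ → ℝ) :
    cov[fun ω ↦ ∑ j ∈ Finset.range (n + 1), w j * obs σ τ W η j ω,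
        fun ω ↦ ∑ j ∈ Finset.range (n + 1), w' j * obs σ τ W η j ω; ℙ] =
      σ ^ 2 * ((∑ j ∈ Finset.range (n + 1), ∑ l ∈ Finset.range (n + 1),
          w j * w' l * (min j l : ℕ)) / n) +
        τ ^ 2 * ∑ j ∈ Finset.range (n + 1), w j * w' j := by
  have memLp_term (u : ℕ → ℝ) {j : ℕ} (hj : j ∈ Finset.range (n + 1)) :
      MemLp (fun ω ↦ u j * obs σ τ W η j ω) 2 ℙ := by
    obtain ⟨v, hv⟩ := h.hasLaw_sum_obs σ τ (Pi.single j (u j))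
    simpa [Pi.single_apply, hj, Finset.mem_range.mp hj] using hv.hasGaussianLaw.memLp_two
  obtain ⟨v, hv⟩ := h.hasLaw_signal (Nat.zero_le n)
  have := hv.hasGaussianLaw.isProbabilityMeasure
  rw [covariance_fun_sum_fun_sum' (fun j ↦ memLp_term w) (fun j ↦ memLp_term w')]
  have hcov : ∀ j ∈ Finset.range (n + 1), ∀ l ∈ Finset.range (n + 1),
      cov[fun ω ↦ w j * obs σ τ W η j ω, fun ω ↦ w' l * obs σ τ W η l ω; ℙ] =
        σ ^ 2 * (w j * w' l * (min j l : ℕ) / n) +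
          τ ^ 2 * if j = l then w j * w' l else 0 := by
    intro j hj l hl
    rw [covariance_const_mul_left, covariance_const_mul_right,
      h.covariance_obs σ τ (Finset.mem_range_succ_iff.mp hj) (Finset.mem_range_succ_iff.mp hl)]
    push_cast
    split_ifs <;> ring
  rw [Finset.sum_congr rfl fun j hj ↦ Finset.sum_congr rfl (hcov j hj)]
  simp only [Finset.sum_add_distrib, ← Finset.mul_sum, ← Finset.sum_div]
  congr 2
  exact Finset.sum_congr rfl fun j hj ↦ by simp [Finset.mem_range.mp hj]

end IsSimplifiedModel
end Model

section BoundedVariation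

section LinearOrder

variable {α : Type*} [LinearOrder α]

lemma eVariationOn_add_le {E : Type*} [SeminormedAddCommGroup E] (f g : α → E) (s : Set α) :
    eVariationOn (f + g) s ≤ eVariationOn f s + eVariationOn g s :=
  iSup_le fun ⟨n, u, hu, us⟩ ↦ calc
    _ ≤ ∑ i ∈ Finset.range n, (edist (f (u (i + 1))) (f (u i)) + edist (g (u (i + 1))) (g (u i))) :=
      Finset.sum_le_sum fun i _ ↦ edist_add_add_le _ _ _ _
    _ ≤ _ := by
      rw [Finset.sum_add_distrib]
      exact add_le_add (eVariationOn.sum_le hu us) (eVariationOn.sum_le hu us)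

lemma boundedVariationOn_add {E : Type*} [SeminormedAddCommGroup E] {f g : α → E} {s : Set α}
    (hf : BoundedVariationOn f s) (hg : BoundedVariationOn g s) : BoundedVariationOn (f + g) s :=
  ne_top_of_le_ne_top (ENNReal.add_ne_top.mpr ⟨hf, hg⟩) (eVariationOn_add_le f g s)

lemma boundedVariationOn_indicator_of_isUpperSet {t : Set α} (ht : IsUpperSet t) (c : ℝ)
    (s : Set α) : BoundedVariationOn (t.indicator fun _ ↦ c) s := by
  have h_mono : MonotoneOn (t.indicator (1 : α → ℝ)) s := fun x _ y _ hxy ↦ by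
    by_cases hx : x ∈ t
    · rw [Set.indicator_of_mem hx, Set.indicator_of_mem (ht hxy hx)]
      rfl
    · rw [Set.indicator_of_notMem hx]
      exact Set.indicator_nonneg (fun _ _ ↦ zero_le_one) y
  have h_bv : BoundedVariationOn (t.indicator (1 : α → ℝ)) s :=
    h_mono.boundedVariationOn (C := 1) fun x _ ↦ by
      by_cases hx : x ∈ t <;> simp [hx]
  have h_smul : (t.indicator fun _ ↦ c) = (c • ·) ∘ t.indicator (1 : α → ℝ) := by
    ext x
    by_cases hx : x ∈ t <;> simp [hx]
  exact h_smul ▸ (lipschitzWith_smul c).comp_boundedVariationOn h_bv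

lemma boundedVariationOn_piSingle (x : α) (c : ℝ) (s : Set α) :
    BoundedVariationOn (Pi.single x c) s := by
  have h_single : Pi.single x c =
      ((Set.Ici x).indicator fun _ ↦ c) + (Set.Ioi x).indicator fun _ ↦ -c := by
    ext z
    rcases lt_trichotomy z x with h | rfl | h
    · simp [h.ne, h.not_ge, h.not_gt]
    · simp
    · simp [h.ne', h.le, h]
  rw [h_single]
  exact boundedVariationOn_add (boundedVariationOn_indicator_of_isUpperSet (isUpperSet_Ici x) c s)
    (boundedVariationOn_indicator_of_isUpperSet (isUpperSet_Ioi x) (-c) s)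

lemma boundedVariationOn_of_eqOn_diff_singleton {f g : α → ℝ} {s : Set α} {x : α}
    (hg : BoundedVariationOn g s) (hfg : Set.EqOn f g (s \ {x})) : BoundedVariationOn f s := by
  have h_eq : Set.EqOn f (g + Pi.single x (f x - g x)) s := by
    intro z hz
    rcases eq_or_ne z x with rfl | hzx
    · simp
    · simp [hzx, hfg ⟨hz, hzx⟩]
  rw [BoundedVariationOn, eVariationOn.congr h_eq]
  exact boundedVariationOn_add hg (boundedVariationOn_piSingle x _ s)

end LinearOrder

lemma boundedVariationOn_Icc_of_lipschitzOnWith_Ioo {f : ℝ → ℝ} {a b : ℝ} {K : NNReal}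
    (hf : LipschitzOnWith K f (Set.Ioo a b)) : BoundedVariationOn f (Set.Icc a b) := by
  obtain ⟨h, hh, hfh⟩ := hf.extend_real
  have hh_bv : BoundedVariationOn h (Set.Icc a b) := hh.comp_boundedVariationOn (.id_Icc a b)
  have hu : BoundedVariationOn (Function.update h a (f a)) (Set.Icc a b) :=
    boundedVariationOn_of_eqOn_diff_singleton (x := a) hh_bv fun z hz ↦
      Function.update_of_ne hz.2 _ _
  refine boundedVariationOn_of_eqOn_diff_singleton (x := b) hu fun z ⟨⟨haz, hzb⟩, hzb'⟩ ↦ ?_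
  rcases haz.eq_or_lt with rfl | haz'
  · simp
  · rw [Function.update_of_ne haz'.ne']
    exact hfh ⟨haz', hzb.lt_of_ne hzb'⟩

lemma boundedVariationOn_Icc_of_piecewise {f : ℝ → ℝ} {t : ℕ → ℝ} {N : ℕ}
    (ht : ∀ i < N, t i ≤ t (i + 1))
    (hf : ∀ i < N, BoundedVariationOn f (Set.Icc (t i) (t (i + 1)))) :
    t 0 ≤ t N ∧ BoundedVariationOn f (Set.Icc (t 0) (t N)) := by
  induction N with
  | zero => exact ⟨le_rfl, .of_subsingleton (by simp)⟩
  | succ N ih =>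
    obtain ⟨h_le, h_bv⟩ := ih (fun i hi ↦ ht i (by omega)) fun i hi ↦ hf i (by omega)
    have h_step := ht N N.lt_succ_self
    refine ⟨h_le.trans h_step, ?_⟩
    rw [BoundedVariationOn, ← Set.Icc_union_Icc_eq_Icc h_le h_step,
      eVariationOn.union _ (isGreatest_Icc h_le) (isLeast_Icc h_step)]
    exact ENNReal.add_ne_top.mpr ⟨h_bv, hf N N.lt_succ_self⟩

lemma boundedVariationOn_univ_indicator_Icc {f : ℝ → ℝ} {a b : ℝ} (hab : a ≤ b)
    (hf : BoundedVariationOn f (Set.Icc a b)) :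
    BoundedVariationOn ((Set.Icc a b).indicator f) Set.univ := by
  have h_zero {s : Set ℝ} : BoundedVariationOn (0 : ℝ → ℝ) s :=
    monotoneOn_const.boundedVariationOn (C := 0) (by simp)
  have h_left : BoundedVariationOn ((Set.Icc a b).indicator f) (Set.Iic a) :=
    boundedVariationOn_of_eqOn_diff_singleton (x := a) h_zero fun z ⟨hza, hne⟩ ↦
      Set.indicator_of_notMem (fun hz ↦ hne (le_antisymm hza hz.1)) f
  have h_right : BoundedVariationOn ((Set.Icc a b).indicator f) (Set.Ici b) :=
    boundedVariationOn_of_eqOn_diff_singleton (x := b) h_zero fun z ⟨hbz, hne⟩ ↦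
      Set.indicator_of_notMem (fun hz ↦ hne (le_antisymm hz.2 hbz)) f
  have h_mid : BoundedVariationOn ((Set.Icc a b).indicator f) (Set.Icc a b) := by
    rwa [BoundedVariationOn, eVariationOn.congr (Set.eqOn_indicator)]
  rw [BoundedVariationOn, ← Set.Iic_union_Ici (a := b),
    eVariationOn.union _ isGreatest_Iic isLeast_Ici,
    ← Set.Iic_union_Icc_eq_Iic hab, eVariationOn.union _ isGreatest_Iic (isLeast_Icc hab)]
  exact ENNReal.add_ne_top.mpr ⟨ENNReal.add_ne_top.mpr ⟨h_left, h_mid⟩, h_right⟩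

end BoundedVariation

section RiemannSum

/-- The total variation of `f : ℝ → ℝ` on the whole line, as a real number. It is the variation of
`f` only when that is finite, and `0` otherwise. -/
noncomputable def totalVariation (f : ℝ → ℝ) : ℝ := (eVariationOn f Set.univ).toReal

lemma totalVariation_nonneg (f : ℝ → ℝ) : 0 ≤ totalVariation f := ENNReal.toReal_nonneg

variable {f g : ℝ → ℝ}

lemma abs_le_totalVariation (hf : BoundedVariationOn f Set.univ) {y : ℝ} (hy : f y = 0) (x : ℝ) :
    |f x| ≤ totalVariation f := by
  simpa [Real.dist_eq, hy, totalVariation] using hf.dist_le (Set.mem_univ x) (Set.mem_univ y)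

lemma intervalIntegrable_of_boundedVariationOn (hf : BoundedVariationOn f Set.univ) (a b : ℝ) :
    IntervalIntegrable f volume a b := by
  obtain ⟨p, q, hp, hq, rfl⟩ :=
    hf.locallyBoundedVariationOn.exists_monotoneOn_sub_monotoneOn
  exact ((hp.mono (Set.subset_univ _)).intervalIntegrable).sub
    (hq.mono (Set.subset_univ _)).intervalIntegrable

lemma eVariationOn_comp_sub_le (f : ℝ → ℝ) (p : ℝ) :
    eVariationOn (fun x ↦ f (x - p)) Set.univ ≤ eVariationOn f Set.univ :=
  eVariationOn.comp_le_of_monotoneOn f (· - p)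
    (fun _ _ _ _ h ↦ sub_le_sub_right h p) (Set.mapsTo_univ _ _)

lemma eVariationOn_mul_comp_sub_le {y z : ℝ} (hf : f y = 0) (hg : g z = 0) (p : ℝ) :
    eVariationOn (fun x ↦ f x * g (x - p)) Set.univ ≤
      2 * (eVariationOn f Set.univ * eVariationOn g Set.univ) := by
  have enorm_le {h : ℝ → ℝ} {t : ℝ} (ht : h t = 0) (x : ℝ) : ‖h x‖ₑ ≤ eVariationOn h Set.univ := by
    simpa [edist_eq_enorm_sub, ht] using eVariationOn.edist_le h (Set.mem_univ x) (Set.mem_univ t)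
  calc
    _ ≤ eVariationOn f Set.univ * eVariationOn (fun x ↦ g (x - p)) Set.univ +
        eVariationOn g Set.univ * eVariationOn f Set.univ :=
      eVariationOn_fun_mul_le (fun x _ ↦ enorm_le hf x) fun x _ ↦ enorm_le hg (x - p)
    _ ≤ eVariationOn f Set.univ * eVariationOn g Set.univ +
        eVariationOn g Set.univ * eVariationOn f Set.univ := by
      gcongr
      exact eVariationOn_comp_sub_le g p
    _ = _ := by ring

lemma boundedVariationOn_mul_comp_sub (hf : BoundedVariationOn f Set.univ)
    (hg : BoundedVariationOn g Set.univ) {y z : ℝ} (hfy : f y = 0) (hgz : g z = 0) (p : ℝ) :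
    BoundedVariationOn (fun x ↦ f x * g (x - p)) Set.univ :=
  ne_top_of_le_ne_top (ENNReal.mul_ne_top ENNReal.ofNat_ne_top (ENNReal.mul_ne_top hf hg))
    (eVariationOn_mul_comp_sub_le hfy hgz p)

lemma totalVariation_mul_comp_sub_le (hf : BoundedVariationOn f Set.univ)
    (hg : BoundedVariationOn g Set.univ) {y z : ℝ} (hfy : f y = 0) (hgz : g z = 0) (p : ℝ) :
    totalVariation (fun x ↦ f x * g (x - p)) ≤ 2 * (totalVariation f * totalVariation g) := by
  have h := ENNReal.toReal_mono
    (ENNReal.mul_ne_top ENNReal.ofNat_ne_top (ENNReal.mul_ne_top hf hg))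
    (eVariationOn_mul_comp_sub_le hfy hgz p)
  rwa [ENNReal.toReal_mul, ENNReal.toReal_mul, ENNReal.toReal_ofNat] at h

lemma abs_sub_integral_le_variationOnFromTo (hf : BoundedVariationOn f Set.univ) {x y : ℝ}
    (hxy : x ≤ y) :
    |(y - x) * f x - ∫ t in x..y, f t| ≤ (y - x) * variationOnFromTo f Set.univ x y := by
  have h_eq : (y - x) * f x - ∫ t in x..y, f t = ∫ t in x..y, (f x - f t) := by
    rw [intervalIntegral.integral_sub intervalIntegrable_const
      (intervalIntegrable_of_boundedVariationOn hf x y), intervalIntegral.integral_const,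
      smul_eq_mul]
  have h_le : ∀ t ∈ Set.uIoc x y, ‖f x - f t‖ ≤ variationOnFromTo f Set.univ x y := by
    intro t ht
    rw [Set.uIoc_of_le hxy] at ht
    have h_var := variationOnFromTo.abs_sub_le_sub_of_le hf.locallyBoundedVariationOn
      (Set.mem_univ x) (Set.mem_univ x) (Set.mem_univ t) ht.1.le
    rw [variationOnFromTo.self, sub_zero, abs_sub_comm] at h_var
    exact h_var.trans (variationOnFromTo.monotoneOn hf.locallyBoundedVariationOn (Set.mem_univ x)
      (Set.mem_univ t) (Set.mem_univ y) ht.2)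
  rw [h_eq, mul_comm]
  simpa [abs_of_nonneg (sub_nonneg.mpr hxy)] using
    intervalIntegral.norm_integral_le_of_norm_le_const h_le

lemma abs_riemannSum_sub_integral_le (hf : BoundedVariationOn f Set.univ) {δ : ℝ} (hδ : 0 ≤ δ)
    (a : ℝ) {p q : ℕ} (hpq : p ≤ q) :
    |δ * ∑ k ∈ Finset.Ico p q, f (δ * k - a) - ∫ x in (δ * p - a)..(δ * q - a), f x| ≤
      δ * totalVariation f := by
  set x : ℕ → ℝ := fun k ↦ δ * k - a with hx
  set v : ℕ → ℝ := fun k ↦ variationOnFromTo f Set.univ (x p) (x k)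
  have h_step (k : ℕ) : x (k + 1) - x k = δ := by simp only [hx]; push_cast; ring
  have h_cell (k : ℕ) : |δ * f (x k) - ∫ t in x k..x (k + 1), f t| ≤ δ * (v (k + 1) - v k) := by
    have h := abs_sub_integral_le_variationOnFromTo hf (sub_nonneg.mp ((h_step k).symm ▸ hδ))
    rwa [h_step, ← variationOnFromTo.sub_right hf.locallyBoundedVariationOn (Set.mem_univ (x p))
      (Set.mem_univ _) (Set.mem_univ _)] at h
  calc
    _ = |∑ k ∈ Finset.Ico p q, (δ * f (x k) - ∫ t in x k..x (k + 1), f t)| := by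
      rw [Finset.sum_sub_distrib, ← Finset.mul_sum,
        intervalIntegral.sum_integral_adjacent_intervals_Ico hpq fun k _ ↦
          intervalIntegrable_of_boundedVariationOn hf _ _]
    _ ≤ ∑ k ∈ Finset.Ico p q, δ * (v (k + 1) - v k) :=
      (Finset.abs_sum_le_sum_abs _ _).trans (Finset.sum_le_sum fun k _ ↦ h_cell k)
    _ = δ * v q := by
      rw [← Finset.mul_sum, Finset.sum_Ico_sub v hpq,
        show v p = 0 from variationOnFromTo.self .., sub_zero]
    _ ≤ δ * totalVariation f := by
      gcongr
      exact (le_abs_self _).trans (variationOnFromTo.abs_le_eVariationOn hf)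

end RiemannSum

section Autocorrelation

/-- The autocorrelation of `f` at lag `p`. Up to scaling, the autocorrelations of a kernel and of
its tail integral are the limits of the noise and signal covariances of pre-averages whose windows
are shifted by `p`. -/
noncomputable def autocorr (f : ℝ → ℝ) (p : ℝ) : ℝ := ∫ x, f x * f (x - p)

lemma autocorr_neg (f : ℝ → ℝ) (p : ℝ) : autocorr f (-p) = autocorr f p := by
  rw [autocorr, ← integral_sub_right_eq_self _ p]
  simp [autocorr, mul_comm]

lemma intervalIntegral_eq_integral_of_eq_zero {E : Type*} [NormedAddCommGroup E] [NormedSpace ℝ E]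
    {f : ℝ → E} {a b : ℝ} (hab : a ≤ b) (hf : ∀ x ∉ Set.Icc a b, f x = 0) :
    ∫ x in a..b, f x = ∫ x, f x := by
  rw [intervalIntegral.integral_of_le hab, ← integral_Icc_eq_integral_Ioc,
    setIntegral_eq_integral_of_forall_compl_eq_zero hf]

variable {f : ℝ → ℝ} (hf₀ : ∀ x ∉ Set.Icc (0 : ℝ) 2, f x = 0)
include hf₀

lemma autocorr_eq_zero_of_two_le_abs {p : ℝ} (hp : 2 ≤ |p|) : autocorr f p = 0 := by
  refine integral_eq_zero_of_ae ?_
  filter_upwards [Measure.ae_ne volume 0, Measure.ae_ne volume 2] with x hx0 hx2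
  by_contra h
  obtain ⟨hfx, hfxp⟩ := mul_ne_zero_iff.mp h
  obtain ⟨h0x, hx2'⟩ := not_imp_comm.mp (hf₀ x) hfx
  obtain ⟨hpx, hxp⟩ := not_imp_comm.mp (hf₀ (x - p)) hfxp
  have := h0x.lt_of_ne' hx0
  have := hx2'.lt_of_ne hx2
  rcases le_abs'.mp hp with hp | hp <;> linarith

lemma autocorr_one_of_reflection {s : ℝ} (hs : ∀ x, f (2 - x) = s * f x) :
    autocorr f 1 = s * ∫ u in (0 : ℝ)..1, f u * f (1 - u) := by
  have h_supp : ∀ x ∉ Set.Icc (1 : ℝ) 2, f x * f (x - 1) = 0 := by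
    intro x hx
    rcases lt_or_ge x 1 with h | h
    · rw [hf₀ (x - 1) fun h' ↦ by linarith [h'.1], mul_zero]
    · rw [hf₀ x fun h' ↦ hx ⟨h, h'.2⟩, zero_mul]
  have h_subst := intervalIntegral.integral_comp_sub_left (a := 0) (b := 1)
    (fun x ↦ f x * f (x - 1)) 2
  rw [autocorr, ← intervalIntegral_eq_integral_of_eq_zero one_le_two h_supp,
    ← intervalIntegral.integral_const_mul]
  norm_num at h_subst
  rw [← h_subst]
  congr 1 with u
  rw [hs, show 2 - u - 1 = 1 - u by ring, mul_assoc]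

lemma autocorr_zero_of_reflection (hf : BoundedVariationOn f Set.univ) {s : ℝ}
    (hs : ∀ x, f (2 - x) = s * f x) (hs_sq : s ^ 2 = 1) :
    autocorr f 0 = 2 * ∫ u in (0 : ℝ)..1, f u ^ 2 := by
  have h_supp : ∀ x ∉ Set.Icc (0 : ℝ) 2, f x * f (x - 0) = 0 := fun x hx ↦ by
    rw [hf₀ x hx, zero_mul]
  have h_int := intervalIntegrable_of_boundedVariationOn
    (boundedVariationOn_mul_comp_sub hf hf (hf₀ 3 (by norm_num)) (hf₀ 3 (by norm_num)) 0)
  have h_sq (x : ℝ) : f (2 - x) ^ 2 = f x ^ 2 := by rw [hs, mul_pow, hs_sq, one_mul]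
  have h_subst := intervalIntegral.integral_comp_sub_left (a := 0) (b := 1) (fun x ↦ f x ^ 2) 2
  norm_num [h_sq] at h_subst
  rw [autocorr, ← intervalIntegral_eq_integral_of_eq_zero zero_le_two h_supp,
    ← intervalIntegral.integral_add_adjacent_intervals (h_int 0 1) (h_int 1 2)]
  simp only [sub_zero, ← pow_two]
  rw [← h_subst, two_mul]

lemma abs_riemannSum_sub_integral_le_of_eq_zero (hf : BoundedVariationOn f Set.univ) {δ a : ℝ}
    {n : ℕ} (hδ : 0 ≤ δ) (ha : 0 ≤ a) (han : a + 2 ≤ δ * n) :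
    |δ * ∑ j ∈ Finset.range (n + 1), f (δ * j - a) - ∫ x, f x| ≤ δ * totalVariation f := by
  have h_supp : ∀ x ∉ Set.Icc (δ * (0 : ℕ) - a) (δ * (n + 1 : ℕ) - a), f x = 0 := by
    intro x hx
    refine hf₀ x fun h ↦ hx ⟨?_, ?_⟩
    · simpa using h.1.trans' (neg_nonpos.mpr ha)
    · push_cast
      linarith [h.2]
  rw [← intervalIntegral_eq_integral_of_eq_zero (by push_cast; linarith) h_supp,
    Finset.range_eq_Ico]
  exact abs_riemannSum_sub_integral_le hf hδ a (Nat.zero_le (n + 1))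

lemma abs_riemannSum_mul_sub_autocorr_le (hf : BoundedVariationOn f Set.univ) {δ a : ℝ} {n : ℕ}
    (hδ : 0 ≤ δ) (ha : 0 ≤ a) (han : a + 2 ≤ δ * n) (a' : ℝ) :
    |δ * ∑ j ∈ Finset.range (n + 1), f (δ * j - a) * f (δ * j - a') - autocorr f (a' - a)| ≤
      δ * (2 * (totalVariation f * totalVariation f)) := by
  have hf3 : f 3 = 0 := hf₀ 3 (by norm_num)
  have h_riemann := abs_riemannSum_sub_integral_le_of_eq_zero
    (f := fun x ↦ f x * f (x - (a' - a))) (fun x hx ↦ by rw [hf₀ x hx, zero_mul])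
    (boundedVariationOn_mul_comp_sub hf hf hf3 hf3 (a' - a)) hδ ha han
  simp only [show ∀ x, x - a - (a' - a) = x - a' from fun x ↦ by ring] at h_riemann
  exact h_riemann.trans (by gcongr; exact totalVariation_mul_comp_sub_le hf hf hf3 hf3 _)

end Autocorrelation

section TailIntegral

/-- The integral of `g` to the right of `x`, for a function `g` that vanishes beyond `2`. For a
pre-average function `λ` it is the function `Λ` of the theorem, extended by zero. -/
noncomputable def tailIntegral (g : ℝ → ℝ) (x : ℝ) : ℝ := ∫ t in x..2, g t

/-- The analytic properties of a pre-average function, extended by zero outside `[0, 2]`, on which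
the covariance asymptotics rest. -/
structure IsPreAverageKernel (g : ℝ → ℝ) : Prop where
  boundedVariationOn : BoundedVariationOn g Set.univ
  eq_zero : ∀ x ∉ Set.Icc (0 : ℝ) 2, g x = 0
  integral_eq_zero : ∫ x in (0 : ℝ)..2, g x = 0

namespace IsPreAverageKernel

variable {g : ℝ → ℝ}

lemma intervalIntegrable (hg : IsPreAverageKernel g) (a b : ℝ) : IntervalIntegrable g volume a b :=
  intervalIntegrable_of_boundedVariationOn hg.boundedVariationOn a b

lemma abs_apply_le (hg : IsPreAverageKernel g) (x : ℝ) : |g x| ≤ totalVariation g :=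
  abs_le_totalVariation hg.boundedVariationOn (hg.eq_zero 3 (by norm_num)) x

lemma integral_eq_tailIntegral (hg : IsPreAverageKernel g) (x : ℝ) {b : ℝ} (hb : 2 ≤ b) :
    ∫ t in x..b, g t = tailIntegral g x := by
  have h_zero : ∫ t in (2 : ℝ)..b, g t = 0 :=
    intervalIntegral.integral_zero_ae <| .of_forall fun t ht ↦
      hg.eq_zero t fun h ↦ by
        rw [Set.uIoc_of_le hb] at ht
        exact ht.1.not_ge h.2
  rw [tailIntegral, ← intervalIntegral.integral_add_adjacent_intervals
    (hg.intervalIntegrable x 2) (hg.intervalIntegrable 2 b), h_zero, add_zero]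

lemma tailIntegral_eq_neg_integral (hg : IsPreAverageKernel g) (x : ℝ) :
    tailIntegral g x = -∫ t in (0 : ℝ)..x, g t := by
  rw [tailIntegral, eq_neg_iff_add_eq_zero, add_comm,
    intervalIntegral.integral_add_adjacent_intervals (hg.intervalIntegrable 0 x)
      (hg.intervalIntegrable x 2), hg.integral_eq_zero]

lemma tailIntegral_of_nonpos (hg : IsPreAverageKernel g) {x : ℝ} (hx : x ≤ 0) :
    tailIntegral g x = 0 := by
  rw [hg.tailIntegral_eq_neg_integral, neg_eq_zero]
  refine intervalIntegral.integral_zero_ae ?_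
  filter_upwards [Measure.ae_ne volume 0] with t ht0 ht
  rw [Set.uIoc_of_ge hx] at ht
  exact hg.eq_zero t fun h ↦ ht0 (le_antisymm ht.2 h.1)

lemma tailIntegral_eq_zero (hg : IsPreAverageKernel g) (x : ℝ) (hx : x ∉ Set.Icc (0 : ℝ) 2) :
    tailIntegral g x = 0 := by
  rcases lt_or_ge x 0 with h | h
  · exact hg.tailIntegral_of_nonpos h.le
  · rw [← hg.integral_eq_tailIntegral x (le_of_not_ge fun h2 ↦ hx ⟨h, h2⟩),
      intervalIntegral.integral_same]

lemma lipschitzWith_tailIntegral (hg : IsPreAverageKernel g) :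
    LipschitzWith (totalVariation g).toNNReal (tailIntegral g) := by
  refine LipschitzWith.of_dist_le_mul fun x y ↦ ?_
  rw [Real.coe_toNNReal _ (totalVariation_nonneg g), Real.dist_eq, Real.dist_eq,
    hg.tailIntegral_eq_neg_integral, hg.tailIntegral_eq_neg_integral, neg_sub_neg,
    intervalIntegral.integral_interval_sub_left (hg.intervalIntegrable 0 y)
      (hg.intervalIntegrable 0 x), abs_sub_comm x]
  exact intervalIntegral.norm_integral_le_of_norm_le_const (f := g) fun t _ ↦ hg.abs_apply_le t

lemma boundedVariationOn_tailIntegral (hg : IsPreAverageKernel g) :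
    BoundedVariationOn (tailIntegral g) Set.univ := by
  rw [← Set.indicator_eq_self.mpr fun x ↦ not_imp_comm.mp (hg.tailIntegral_eq_zero x)]
  exact boundedVariationOn_univ_indicator_Icc zero_le_two
    (hg.lipschitzWith_tailIntegral.comp_boundedVariationOn (.id_Icc 0 2))

lemma abs_sum_Ico_sub_tailIntegral_le (hg : IsPreAverageKernel g) {δ a : ℝ} {n : ℕ} (hδ : 0 ≤ δ)
    (han : a + 2 ≤ δ * n) {k : ℕ} (hk : k ≤ n + 1) :
    |∑ j ∈ Finset.Ico k (n + 1), δ * g (δ * j - a) - tailIntegral g (δ * k - a)| ≤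
      δ * totalVariation g := by
  rw [← hg.integral_eq_tailIntegral (b := δ * (n + 1 : ℕ) - a) _ (by push_cast; linarith),
    ← Finset.mul_sum]
  exact abs_riemannSum_sub_integral_le hg.boundedVariationOn hδ a hk

end IsPreAverageKernel

end TailIntegral

section CovarianceAsymptotics

lemma sum_sum_mul_mul_min_eq_sum_mul (w w' : ℕ → ℝ) (n : ℕ) :
    ∑ j ∈ Finset.range n, ∑ l ∈ Finset.range n, w j * w' l * (min j l : ℕ) =
      ∑ k ∈ Finset.Ico 1 n, (∑ j ∈ Finset.Ico k n, w j) * ∑ l ∈ Finset.Ico k n, w' l := by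
  have h_min {j l : ℕ} (hj : j < n) :
      ((min j l : ℕ) : ℝ) = ∑ k ∈ Finset.Ico 1 n, if k ≤ j ∧ k ≤ l then 1 else 0 := by
    have h_filter : (Finset.Ico 1 n).filter (fun k ↦ k ≤ j ∧ k ≤ l) = Finset.Icc 1 (min j l) := by
      ext k
      simp only [Finset.mem_filter, Finset.mem_Ico, Finset.mem_Icc, le_min_iff]
      omega
    rw [Finset.sum_boole, h_filter, Nat.card_Icc, Nat.add_sub_cancel]
  have h_tail (u : ℕ → ℝ) {k : ℕ} :
      ∑ j ∈ Finset.Ico k n, u j = ∑ j ∈ Finset.range n, if k ≤ j then u j else 0 := by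
    rw [← Finset.sum_filter]
    congr 1
    ext j
    simp [and_comm]
  calc
    _ = ∑ j ∈ Finset.range n, ∑ l ∈ Finset.range n, ∑ k ∈ Finset.Ico 1 n,
        (if k ≤ j then w j else 0) * if k ≤ l then w' l else 0 := by
      refine Finset.sum_congr rfl fun j hj ↦ Finset.sum_congr rfl fun l _ ↦ ?_
      rw [h_min (Finset.mem_range.mp hj), Finset.mul_sum]
      refine Finset.sum_congr rfl fun k _ ↦ ?_
      split_ifs <;> simp_all
    _ = _ := by
      refine ((Finset.sum_congr rfl fun j _ ↦ Finset.sum_comm).trans Finset.sum_comm).trans ?_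
      exact Finset.sum_congr rfl fun k _ ↦ by rw [h_tail w, h_tail w', Finset.sum_mul_sum]

lemma abs_sum_mul_sub_sum_mul_le {ι : Type*} {s : Finset ι} {x x' y y' : ι → ℝ} {ε : ℝ}
    (hx : ∀ k ∈ s, |x k - y k| ≤ ε) (hx' : ∀ k ∈ s, |x' k - y' k| ≤ ε) :
    |∑ k ∈ s, x k * x' k - ∑ k ∈ s, y k * y' k| ≤
      ε * (s.card * ε + ∑ k ∈ s, |y k| + ∑ k ∈ s, |y' k|) := by
  have h_term : ∀ k ∈ s, |x k * x' k - y k * y' k| ≤ ε * (ε + |y k| + |y' k|) := by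
    intro k hk
    have hε := (abs_nonneg _).trans (hx k hk)
    calc
      _ = |(x k - y k) * (x' k - y' k) + y k * (x' k - y' k) + (x k - y k) * y' k| := by ring_nf
      _ ≤ |x k - y k| * |x' k - y' k| + |y k| * |x' k - y' k| + |x k - y k| * |y' k| := by
        simpa only [abs_mul] using
          abs_add_three ((x k - y k) * (x' k - y' k)) (y k * (x' k - y' k)) ((x k - y k) * y' k)
      _ ≤ ε * ε + |y k| * ε + ε * |y' k| := by
        gcongr
        exacts [hx k hk, hx' k hk, hx' k hk, hx k hk]
      _ = _ := by ring
  rw [← Finset.sum_sub_distrib]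
  calc
    _ ≤ ∑ k ∈ s, ε * (ε + |y k| + |y' k|) :=
      (Finset.abs_sum_le_sum_abs _ _).trans (Finset.sum_le_sum h_term)
    _ = _ := by
      rw [← Finset.mul_sum, Finset.sum_add_distrib, Finset.sum_add_distrib, Finset.sum_const,
        nsmul_eq_mul]

namespace IsPreAverageKernel

variable {g : ℝ → ℝ}

lemma sum_abs_tailIntegral_le (hg : IsPreAverageKernel g) {δ a : ℝ} {n : ℕ} (hδ : 0 ≤ δ)
    (ha : 0 ≤ a) (han : a + 2 ≤ δ * n) :
    δ * ∑ k ∈ Finset.Ico 1 (n + 1), |tailIntegral g (δ * k - a)| ≤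
      (∫ x, |tailIntegral g x|) + δ * totalVariation fun x ↦ |tailIntegral g x| := by
  have h_bv : BoundedVariationOn (fun x ↦ ‖tailIntegral g x‖) Set.univ :=
    (lipschitzWith_one_norm (E := ℝ)).comp_boundedVariationOn hg.boundedVariationOn_tailIntegral
  have h_riemann := abs_riemannSum_sub_integral_le_of_eq_zero
    (fun x hx ↦ norm_eq_zero.mpr (hg.tailIntegral_eq_zero x hx)) h_bv hδ ha han
  simp only [Real.norm_eq_abs] at h_riemann
  have h_subset : Finset.Ico 1 (n + 1) ⊆ Finset.range (n + 1) := fun k hk ↦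
    Finset.mem_range.mpr (Finset.mem_Ico.mp hk).2
  calc
    _ ≤ δ * ∑ k ∈ Finset.range (n + 1), |tailIntegral g (δ * k - a)| := by
      gcongr
    _ ≤ _ := by linarith [(abs_le.mp h_riemann).2]

lemma sum_Ico_tailIntegral_mul_eq_sum_range (hg : IsPreAverageKernel g) (δ : ℝ) {a : ℝ}
    (ha : 0 ≤ a) (n : ℕ) (y : ℕ → ℝ) :
    ∑ k ∈ Finset.Ico 1 (n + 1), tailIntegral g (δ * k - a) * y k =
      ∑ k ∈ Finset.range (n + 1), tailIntegral g (δ * k - a) * y k := by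
  have h_zero : tailIntegral g (δ * (0 : ℕ) - a) = 0 :=
    hg.tailIntegral_of_nonpos (by simpa using ha)
  rw [Finset.range_eq_Ico, Finset.sum_eq_sum_Ico_succ_bot n.succ_pos, h_zero, zero_mul, zero_add]

lemma exists_abs_sum_tail_mul_tail_sub_autocorr_le (hg : IsPreAverageKernel g) :
    ∃ K, ∀ {δ a a' : ℝ} {n : ℕ}, 0 ≤ δ → δ ≤ 1 → 0 ≤ a → 0 ≤ a' → a + 2 ≤ δ * n → a' + 2 ≤ δ * n →
      |δ * ∑ k ∈ Finset.Ico 1 (n + 1), (∑ j ∈ Finset.Ico k (n + 1), δ * g (δ * j - a)) *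
          ∑ j ∈ Finset.Ico k (n + 1), δ * g (δ * j - a') - autocorr (tailIntegral g) (a' - a)| ≤
        K * (δ * (1 + n * δ ^ 2)) := by
  set V := totalVariation g
  set U := totalVariation (tailIntegral g)
  set I := ∫ x, |tailIntegral g x|
  set I' := totalVariation fun x ↦ |tailIntegral g x|
  have hV : 0 ≤ V := totalVariation_nonneg _
  have hI' : 0 ≤ I' := totalVariation_nonneg _
  refine ⟨V ^ 2 + 2 * V * (I + I') + 2 * U ^ 2, fun {δ a a' n} hδ hδ₁ ha ha' han han' ↦ ?_⟩
  have h_tail {b : ℝ} (hb : b + 2 ≤ δ * n) : ∀ k ∈ Finset.Ico 1 (n + 1),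
      |∑ j ∈ Finset.Ico k (n + 1), δ * g (δ * j - b) - tailIntegral g (δ * k - b)| ≤ δ * V :=
    fun k hk ↦ hg.abs_sum_Ico_sub_tailIntegral_le hδ hb (Finset.mem_Ico.mp hk).2.le
  have h_prod := mul_le_mul_of_nonneg_left
    (abs_sum_mul_sub_sum_mul_le (h_tail han) (h_tail han')) hδ
  rw [← abs_of_nonneg hδ, ← abs_mul, abs_of_nonneg hδ, mul_sub,
    hg.sum_Ico_tailIntegral_mul_eq_sum_range δ ha, Nat.card_Ico, Nat.add_sub_cancel] at h_prod
  have h_riemann := abs_riemannSum_mul_sub_autocorr_le hg.tailIntegral_eq_zero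
    hg.boundedVariationOn_tailIntegral hδ ha han a'
  have h_abs {b : ℝ} (hb : 0 ≤ b) (hbn : b + 2 ≤ δ * n) :
      δ * ∑ k ∈ Finset.Ico 1 (n + 1), |tailIntegral g (δ * k - b)| ≤ I + I' :=
    (hg.sum_abs_tailIntegral_le hδ hb hbn).trans (by gcongr; exact mul_le_of_le_one_left hI' hδ₁)
  calc
    _ ≤ _ := (abs_sub_le _ _ _).trans (add_le_add h_prod h_riemann)
    _ = δ * (n * δ ^ 2 * V ^ 2 + V * (δ * ∑ k ∈ Finset.Ico 1 (n + 1), |tailIntegral g (δ * k - a)| +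
          δ * ∑ k ∈ Finset.Ico 1 (n + 1), |tailIntegral g (δ * k - a')|) + 2 * U ^ 2) := by ring
    _ ≤ δ * (n * δ ^ 2 * V ^ 2 + V * ((I + I') + (I + I')) + 2 * U ^ 2) := by
      gcongr
      exacts [h_abs ha han, h_abs ha' han']
    _ ≤ _ := by
      have h_extra : 0 ≤ n * δ ^ 2 * (2 * V * (I + I') + 2 * U ^ 2) + V ^ 2 := by positivity
      linear_combination δ * h_extra

end IsPreAverageKernel
end CovarianceAsymptotics

section BandMatrix

open Filter Topology

lemma sum_sum_Icc_sub_eq_of_band {φ : ℝ → ℝ} (hφ₀ : ∀ p, 2 ≤ |p| → φ p = 0)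
    (hφ : ∀ p, φ (-p) = φ p) {m : ℕ} (hm : 2 ≤ m) :
    ∑ i ∈ Finset.Icc 2 m, ∑ j ∈ Finset.Icc 2 m, φ (j - i) =
      (m - 1) * φ 0 + 2 * (m - 2) * φ 1 := by
  induction m, hm using Nat.le_induction with
  | base => simp; norm_num
  | succ m hm ih =>
    have h_last : ∑ i ∈ Finset.Icc 2 m, φ ((m + 1 : ℕ) - i) = φ 1 := by
      rw [Finset.sum_eq_single_of_mem m (Finset.mem_Icc.mpr ⟨hm, le_rfl⟩) fun i hi hne ↦ ?_]
      · simp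
      · have hi : (i + 1 : ℝ) ≤ m := by
          exact_mod_cast (Finset.mem_Icc.mp hi).2.lt_of_ne hne
        refine hφ₀ _ (le_abs.mpr (.inl ?_))
        push_cast
        linarith
    have h_flip (i : ℕ) : φ (i - (m + 1 : ℕ)) = φ ((m + 1 : ℕ) - i) := by rw [← hφ, neg_sub]
    simp only [Finset.sum_Icc_succ_top (Nat.le_succ_of_le hm), Finset.sum_add_distrib, ih, h_flip,
      h_last, sub_self]
    push_cast
    ring

lemma abs_sum_sum_sq_sub_le_of_band {φ : ℝ → ℝ} (hφ₀ : ∀ p, 2 ≤ |p| → φ p = 0)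
    (hφ : ∀ p, φ (-p) = φ p) {m : ℕ} (hm : 2 ≤ m) {C : ℕ → ℕ → ℝ} {ε : ℝ}
    (hC : ∀ i ∈ Finset.Icc 2 m, ∀ j ∈ Finset.Icc 2 m, |C i j - φ (j - i)| ≤ ε) :
    |∑ i ∈ Finset.Icc 2 m, ∑ j ∈ Finset.Icc 2 m, C i j ^ 2 -
        ((m - 1) * φ 0 ^ 2 + 2 * (m - 2) * φ 1 ^ 2)| ≤
      m * (m * ε ^ 2 + 2 * ε * (|φ 0| + 2 * |φ 1|)) := by
  have hε : 0 ≤ ε := (abs_nonneg _).trans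
    (hC 2 (Finset.mem_Icc.mpr ⟨le_rfl, hm⟩) 2 (Finset.mem_Icc.mpr ⟨le_rfl, hm⟩))
  have hC' : ∀ x ∈ Finset.Icc 2 m ×ˢ Finset.Icc 2 m, |C x.1 x.2 - φ (x.2 - x.1)| ≤ ε :=
    fun x hx ↦ hC _ (Finset.mem_product.mp hx).1 _ (Finset.mem_product.mp hx).2
  have h_sq := sum_sum_Icc_sub_eq_of_band (φ := fun p ↦ φ p ^ 2) (fun p hp ↦ by simp [hφ₀ p hp])
    (fun p ↦ by rw [hφ]) hm
  have h_abs := sum_sum_Icc_sub_eq_of_band (φ := fun p ↦ |φ p|) (fun p hp ↦ by simp [hφ₀ p hp])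
    (fun p ↦ by rw [hφ]) hm
  have h_card : (((Finset.Icc 2 m ×ˢ Finset.Icc 2 m).card : ℕ) : ℝ) ≤ m * m := by
    rw [Finset.card_product, Nat.card_Icc, ← Nat.cast_mul]
    exact_mod_cast Nat.mul_le_mul (by omega) (by omega)
  have h_main := abs_sum_mul_sub_sum_mul_le hC' hC'
  simp only [← pow_two, Finset.sum_product, h_sq, h_abs] at h_main
  calc
    _ ≤ _ := h_main
    _ ≤ ε * (m * m * ε + (m * |φ 0| + 2 * m * |φ 1|) + (m * |φ 0| + 2 * m * |φ 1|)) := by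
      gcongr <;> linarith
    _ = _ := by ring

lemma tendsto_sum_sum_sq_div_of_band {ι : Type*} {l : Filter ι} {m : ι → ℕ}
    (hm : Tendsto m l atTop) {φ : ι → ℝ → ℝ} (hφ₀ : ∀ n p, 2 ≤ |p| → φ n p = 0)
    (hφ : ∀ n p, φ n (-p) = φ n p) {A B : ℝ} (hA : Tendsto (φ · 0) l (𝓝 A))
    (hB : Tendsto (φ · 1) l (𝓝 B)) {C : ι → ℕ → ℕ → ℝ} {ε : ι → ℝ}
    (hε : Tendsto (fun n ↦ m n * ε n ^ 2) l (𝓝 0))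
    (hC : ∀ᶠ n in l, ∀ i ∈ Finset.Icc 2 (m n), ∀ j ∈ Finset.Icc 2 (m n),
      |C n i j - φ n (j - i)| ≤ ε n) :
    Tendsto (fun n ↦ (∑ i ∈ Finset.Icc 2 (m n), ∑ j ∈ Finset.Icc 2 (m n), C n i j ^ 2) / m n) l
      (𝓝 (A ^ 2 + 2 * B ^ 2)) := by
  have h_inv : Tendsto (fun n ↦ (m n : ℝ)⁻¹) l (𝓝 0) :=
    (tendsto_natCast_atTop_atTop.comp hm).inv_tendsto_atTop
  have hε_abs : Tendsto (fun n ↦ |ε n|) l (𝓝 0) := by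
    have h_sq : Tendsto (fun n ↦ ε n ^ 2) l (𝓝 0) := by
      refine squeeze_zero' (.of_forall fun n ↦ sq_nonneg _) ?_ hε
      filter_upwards [hm.eventually_ge_atTop 1] with n hn
      exact le_mul_of_one_le_left (sq_nonneg _) (by exact_mod_cast hn)
    simpa [Real.sqrt_sq_eq_abs] using h_sq.sqrt
  have h_band : Tendsto (fun n ↦ (1 - (m n : ℝ)⁻¹) * φ n 0 ^ 2 +
      2 * (1 - 2 * (m n : ℝ)⁻¹) * φ n 1 ^ 2) l (𝓝 (A ^ 2 + 2 * B ^ 2)) := by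
    simpa using ((h_inv.const_sub 1).mul (hA.pow 2)).add
      ((((h_inv.const_mul 2).const_sub 1).const_mul 2).mul (hB.pow 2))
  have h_error : Tendsto (fun n ↦ m n * ε n ^ 2 + 2 * |ε n| * (|φ n 0| + 2 * |φ n 1|)) l (𝓝 0) := by
    simpa using hε.add ((hε_abs.const_mul 2).mul (hA.abs.add (hB.abs.const_mul 2)))
  refine tendsto_of_tendsto_of_dist h_band
    (squeeze_zero' (.of_forall fun _ ↦ dist_nonneg) ?_ h_error)
  filter_upwards [hm.eventually_ge_atTop 2, hC] with n hn hCn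
  have hm₀ : (0 : ℝ) < m n := Nat.cast_pos.mpr (by omega)
  have h_bound := abs_sum_sum_sq_sub_le_of_band (hφ₀ n) (hφ n) hn
    fun i hi j hj ↦ (hCn i hi j hj).trans (le_abs_self _)
  rw [sq_abs] at h_bound
  refine le_of_mul_le_mul_left (le_of_eq_of_le ?_ h_bound) hm₀
  rw [dist_comm, Real.dist_eq, ← abs_of_pos hm₀, ← abs_mul, abs_of_pos hm₀]
  congr 1
  field_simp

end BandMatrix

section PreAverage

variable {Ω : Type*} {n m : ℕ} {lam : ℝ → ℝ}

lemma preAvg_eq_sum_range (lam : ℝ → ℝ) (n : ℕ) (hm : 0 < m) (A : ℕ → Ω → ℝ) (i : ℕ) :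
    preAvg lam n m A i = fun ω ↦ ∑ j ∈ Finset.range (n + 1),
      (m / n : ℝ) * (Set.Icc 0 2).indicator lam (m / n * j - (i - 2 : ℝ)) * A j ω := by
  funext ω
  have hm' : (0 : ℝ) < m := Nat.cast_pos.mpr hm
  rw [preAvg, blockIdx, Finset.sum_filter, Finset.mul_sum]
  refine Finset.sum_congr rfl fun j _ ↦ ?_
  have h_mem : ((i - 2 : ℝ) / m ≤ j / n ∧ (j / n : ℝ) ≤ i / m) ↔
      (m / n * j - (i - 2) : ℝ) ∈ Set.Icc (0 : ℝ) 2 := by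
    rw [Set.mem_Icc, div_le_iff₀ hm', le_div_iff₀ hm', div_mul_comm, sub_nonneg]
    exact and_congr_right' ⟨fun h ↦ by linarith, fun h ↦ by linarith⟩
  simp only [h_mem, Set.indicator_apply, mul_div_right_comm]
  split_ifs <;> ring

/-- The leading term of `m Cov(Ȳ_i, Ȳ_{i'})` at lag `p = i' - i`, where `g` is the pre-average
function extended by zero. The parameter `q` is `m² / n`, or its limit `c²`. -/
noncomputable def rescaledCov (σ τ q : ℝ) (g : ℝ → ℝ) (p : ℝ) : ℝ :=
  σ ^ 2 * autocorr (tailIntegral g) p + τ ^ 2 * q * autocorr g p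

lemma rescaledCov_neg (σ τ q : ℝ) (g : ℝ → ℝ) (p : ℝ) :
    rescaledCov σ τ q g (-p) = rescaledCov σ τ q g p := by
  rw [rescaledCov, rescaledCov, autocorr_neg, autocorr_neg]

lemma IsPreAverageKernel.rescaledCov_eq_zero {g : ℝ → ℝ} (hg : IsPreAverageKernel g) (σ τ q : ℝ)
    {p : ℝ} (hp : 2 ≤ |p|) : rescaledCov σ τ q g p = 0 := by
  rw [rescaledCov, autocorr_eq_zero_of_two_le_abs hg.tailIntegral_eq_zero hp,
    autocorr_eq_zero_of_two_le_abs hg.eq_zero hp, mul_zero, mul_zero, add_zero]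

lemma IsSimplifiedModel.variance_sum_sq_preAvg [MeasureSpace Ω] {W η : ℕ → Ω → ℝ}
    (h : IsSimplifiedModel n W η) (σ τ : ℝ) (lam : ℝ → ℝ) (hm : 0 < m)
    (s : Finset ℕ) :
    Var[fun ω ↦ ∑ i ∈ s, preAvg lam n m (obs σ τ W η) i ω ^ 2; ℙ] =
      2 * ∑ i ∈ s, ∑ i' ∈ s,
        cov[preAvg lam n m (obs σ τ W η) i, preAvg lam n m (obs σ τ W η) i'; ℙ] ^ 2 := by
  refine variance_sum_sq_of_hasGaussianLaw (fun i _ i' _ ↦ ?_) fun i _ ↦ ?_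
  · simpa only [preAvg_eq_sum_range lam n hm] using h.hasGaussianLaw_sum_obs_prodMk σ τ _ _
  · simpa only [preAvg_eq_sum_range lam n hm] using h.integral_sum_obs σ τ _

lemma IsSimplifiedModel.mul_covariance_preAvg [MeasureSpace Ω] {W η : ℕ → Ω → ℝ}
    (h : IsSimplifiedModel n W η) (σ τ : ℝ) (lam : ℝ → ℝ) (hm : 0 < m) (i i' : ℕ)
    {g : ℝ → ℝ} (hg : g = (Set.Icc 0 2).indicator lam) {δ : ℝ} (hδ : δ = m / n) :
    m * cov[preAvg lam n m (obs σ τ W η) i, preAvg lam n m (obs σ τ W η) i'; ℙ] =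
      σ ^ 2 * (δ * ∑ k ∈ Finset.Ico 1 (n + 1),
        (∑ j ∈ Finset.Ico k (n + 1), δ * g (δ * j - (i - 2))) *
          ∑ j ∈ Finset.Ico k (n + 1), δ * g (δ * j - (i' - 2))) +
      τ ^ 2 * (m ^ 2 / n) *
        (δ * ∑ j ∈ Finset.range (n + 1), g (δ * j - (i - 2)) * g (δ * j - (i' - 2))) := by
  subst hg hδ
  rw [preAvg_eq_sum_range lam n hm, preAvg_eq_sum_range lam n hm, h.covariance_sum_obs,
    sum_sum_mul_mul_min_eq_sum_mul]
  simp only [mul_mul_mul_comm _ _ (m / n : ℝ), ← Finset.mul_sum]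
  ring

lemma IsPreAverageKernel.exists_abs_mul_covariance_preAvg_sub_le
    (hg : IsPreAverageKernel ((Set.Icc 0 2).indicator lam)) (σ τ : ℝ) :
    ∃ K, ∀ {Ω : Type*} [MeasureSpace Ω] {n m : ℕ} {W η : ℕ → Ω → ℝ}, IsSimplifiedModel n W η →
      0 < m → m ≤ n → ∀ i ∈ Finset.Icc 2 m, ∀ i' ∈ Finset.Icc 2 m,
        |m * cov[preAvg lam n m (obs σ τ W η) i, preAvg lam n m (obs σ τ W η) i'; ℙ] -
            rescaledCov σ τ (m ^ 2 / n) ((Set.Icc 0 2).indicator lam) (i' - i)| ≤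
          K * (m / n * (1 + m ^ 2 / n)) := by
  obtain ⟨K, hK⟩ := hg.exists_abs_sum_tail_mul_tail_sub_autocorr_le
  set g := (Set.Icc (0 : ℝ) 2).indicator lam with hg_def
  refine ⟨σ ^ 2 * K + τ ^ 2 * (2 * totalVariation g ^ 2),
    fun {Ω _ n m W η} h hm hmn i hi i' hi' ↦ ?_⟩
  have hn : 0 < n := hm.trans_le hmn
  set δ : ℝ := m / n with hδ
  have hδ₀ : 0 ≤ δ := by positivity
  have hδ₁ : δ ≤ 1 := (div_le_one (by positivity)).mpr (by exact_mod_cast hmn)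
  have hδn : δ * n = m := div_mul_cancel₀ _ (by positivity)
  have h_sq : (m ^ 2 / n : ℝ) = n * δ ^ 2 := by rw [← hδn]; field_simp
  have h_ge {k : ℕ} (hk : k ∈ Finset.Icc 2 m) : (0 : ℝ) ≤ k - 2 := by
    simpa using (Finset.mem_Icc.mp hk).1
  have h_le {k : ℕ} (hk : k ∈ Finset.Icc 2 m) : (k - 2 + 2 : ℝ) ≤ δ * n := by
    simpa [hδn] using (Finset.mem_Icc.mp hk).2
  have h_signal := hK hδ₀ hδ₁ (h_ge hi) (h_ge hi') (h_le hi) (h_le hi')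
  have h_noise := abs_riemannSum_mul_sub_autocorr_le hg.eq_zero hg.boundedVariationOn hδ₀ (h_ge hi)
    (h_le hi) (i' - 2)
  rw [sub_sub_sub_cancel_right] at h_signal h_noise
  rw [h.mul_covariance_preAvg σ τ lam hm i i' hg_def hδ, rescaledCov, add_sub_add_comm,
    ← mul_sub, ← mul_sub, h_sq]
  refine (abs_add_le _ _).trans ?_
  rw [abs_mul, abs_mul, abs_of_nonneg (sq_nonneg σ),
    abs_of_nonneg (by positivity : 0 ≤ τ ^ 2 * (n * δ ^ 2))]
  calc
    _ ≤ σ ^ 2 * (K * (δ * (1 + n * δ ^ 2))) +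
        τ ^ 2 * (n * δ ^ 2) * (δ * (2 * (totalVariation g * totalVariation g))) := by gcongr
    _ ≤ _ := by
      have h_extra : 0 ≤ τ ^ 2 * (2 * totalVariation g ^ 2) * δ := by positivity
      linear_combination h_extra

end PreAverage

namespace IsPreAverageFn

variable {lam : ℝ → ℝ}

lemma boundedVariationOn (hlam : IsPreAverageFn lam) :
    BoundedVariationOn lam (Set.Icc 0 2) := by
  obtain ⟨N, t, K, -, ht₀, htN, ht, hlip⟩ := hlam.piecewise_lipschitz
  rw [← ht₀, ← htN]
  exact (boundedVariationOn_Icc_of_piecewise (fun i hi ↦ (ht i hi).le) fun i hi ↦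
    boundedVariationOn_Icc_of_lipschitzOnWith_Ioo (hlip i hi)).2

lemma apply_two_sub (hlam : IsPreAverageFn lam) {x : ℝ} (hx : x ∈ Set.Icc (0 : ℝ) 2) :
    lam (2 - x) = -lam x := by
  rcases le_total x 1 with h | h
  · rw [hlam.antisymm x ⟨hx.1, h⟩, neg_neg]
  · rw [hlam.antisymm (2 - x) ⟨by linarith [hx.2], by linarith⟩, sub_sub_cancel]

lemma indicator_two_sub (hlam : IsPreAverageFn lam) (x : ℝ) :
    (Set.Icc 0 2).indicator lam (2 - x) = -1 * (Set.Icc 0 2).indicator lam x := by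
  have h_mem : 2 - x ∈ Set.Icc (0 : ℝ) 2 ↔ x ∈ Set.Icc (0 : ℝ) 2 := by
    rw [Set.sub_mem_Icc_iff_right, sub_zero, sub_self]
  by_cases hx : x ∈ Set.Icc (0 : ℝ) 2
  · rw [Set.indicator_of_mem (h_mem.mpr hx), Set.indicator_of_mem hx, hlam.apply_two_sub hx,
      neg_one_mul]
  · rw [Set.indicator_of_notMem (h_mem.not.mpr hx), Set.indicator_of_notMem hx, mul_zero]

lemma isPreAverageKernel (hlam : IsPreAverageFn lam) :
    IsPreAverageKernel ((Set.Icc 0 2).indicator lam) where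
  boundedVariationOn := boundedVariationOn_univ_indicator_Icc zero_le_two hlam.boundedVariationOn
  eq_zero _ hx := Set.indicator_of_notMem hx _
  integral_eq_zero := by
    have h := intervalIntegral.integral_comp_sub_left (a := 0) (b := 2)
      ((Set.Icc 0 2).indicator lam) 2
    simp only [hlam.indicator_two_sub, neg_one_mul, intervalIntegral.integral_neg, sub_self,
      sub_zero] at h
    linarith

lemma tailIntegral_two_sub (hlam : IsPreAverageFn lam) (x : ℝ) :
    tailIntegral ((Set.Icc 0 2).indicator lam) (2 - x) =
      1 * tailIntegral ((Set.Icc 0 2).indicator lam) x := by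
  have h := intervalIntegral.integral_comp_sub_left (a := 0) (b := x)
    ((Set.Icc 0 2).indicator lam) 2
  simp only [hlam.indicator_two_sub, neg_one_mul, intervalIntegral.integral_neg, sub_zero] at h
  rw [hlam.isPreAverageKernel.tailIntegral_eq_neg_integral x, h, tailIntegral, one_mul]

lemma tailIntegral_eq_bigLam (hlam : IsPreAverageFn lam) {x : ℝ} (hx : x ∈ Set.Icc (0 : ℝ) 2) :
    tailIntegral ((Set.Icc 0 2).indicator lam) x = bigLam lam x := by
  rw [hlam.isPreAverageKernel.tailIntegral_eq_neg_integral, bigLam]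
  congr 1
  refine intervalIntegral.integral_congr fun y hy ↦ ?_
  rw [Set.uIcc_of_le hx.1] at hy
  exact Set.indicator_of_mem (s := Set.Icc 0 2) ⟨hy.1, hy.2.trans hx.2⟩ lam

lemma autocorr_tailIntegral_zero (hlam : IsPreAverageFn lam) :
    autocorr (tailIntegral ((Set.Icc 0 2).indicator lam)) 0 = 1 := by
  have hker := hlam.isPreAverageKernel
  rw [autocorr_zero_of_reflection hker.tailIntegral_eq_zero hker.boundedVariationOn_tailIntegral
    hlam.tailIntegral_two_sub (one_pow 2)]
  refine Eq.trans ?_ (Real.sqrt_eq_one.mp hlam.normalized)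
  congr 1
  refine intervalIntegral.integral_congr fun u hu ↦ ?_
  rw [Set.uIcc_of_le zero_le_one] at hu
  simp only [hlam.tailIntegral_eq_bigLam ⟨hu.1, hu.2.trans one_le_two⟩, bigLam, neg_sq]

lemma autocorr_tailIntegral_one (hlam : IsPreAverageFn lam) :
    autocorr (tailIntegral ((Set.Icc 0 2).indicator lam)) 1 =
      ∫ u in (0 : ℝ)..1, bigLam lam u * bigLam lam (1 - u) := by
  rw [autocorr_one_of_reflection hlam.isPreAverageKernel.tailIntegral_eq_zero
    hlam.tailIntegral_two_sub, one_mul]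
  refine intervalIntegral.integral_congr fun u hu ↦ ?_
  rw [Set.uIcc_of_le zero_le_one] at hu
  simp only [hlam.tailIntegral_eq_bigLam (x := u) ⟨hu.1, by linarith [hu.2]⟩,
    hlam.tailIntegral_eq_bigLam (x := 1 - u) ⟨by linarith [hu.2], by linarith [hu.1]⟩]

lemma autocorr_zero (hlam : IsPreAverageFn lam) :
    autocorr ((Set.Icc 0 2).indicator lam) 0 = 2 * ∫ u in (0 : ℝ)..1, lam u ^ 2 := by
  have hker := hlam.isPreAverageKernel
  rw [autocorr_zero_of_reflection hker.eq_zero hker.boundedVariationOn hlam.indicator_two_sub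
    (by norm_num)]
  congr 1
  refine intervalIntegral.integral_congr fun u hu ↦ ?_
  rw [Set.uIcc_of_le zero_le_one] at hu
  simp only [Set.indicator_of_mem (show u ∈ Set.Icc (0 : ℝ) 2 from ⟨hu.1, by linarith [hu.2]⟩)]

lemma autocorr_one (hlam : IsPreAverageFn lam) :
    autocorr ((Set.Icc 0 2).indicator lam) 1 = -∫ u in (0 : ℝ)..1, lam u * lam (1 - u) := by
  rw [autocorr_one_of_reflection hlam.isPreAverageKernel.eq_zero hlam.indicator_two_sub,
    neg_one_mul]
  congr 1
  refine intervalIntegral.integral_congr fun u hu ↦ ?_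
  rw [Set.uIcc_of_le zero_le_one] at hu
  simp only [
    Set.indicator_of_mem (show u ∈ Set.Icc (0 : ℝ) 2 from ⟨hu.1, by linarith [hu.2]⟩),
    Set.indicator_of_mem
      (show 1 - u ∈ Set.Icc (0 : ℝ) 2 from ⟨by linarith [hu.2], by linarith [hu.1]⟩)]

end IsPreAverageFn

section Limit

open Filter Topology

lemma tendsto_sqrt_natCast_atTop : Tendsto (fun n : ℕ ↦ √(n : ℝ)) atTop atTop :=
  Real.tendsto_sqrt_atTop.comp tendsto_natCast_atTop_atTop

lemma tendsto_mOf_div_sqrt {c : ℝ} (hc : 0 < c) :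
    Tendsto (fun n : ℕ ↦ (mOf c n : ℝ) / √n) atTop (𝓝 c) := by
  have h_floor : Tendsto (fun n : ℕ ↦ √n / ⌊√n / c⌋₊) atTop (𝓝 c) := by
    have h := ((tendsto_nat_floor_mul_div_atTop (R := ℝ) (inv_nonneg.mpr hc.le)).comp
      tendsto_sqrt_natCast_atTop).inv₀ (inv_ne_zero hc.ne')
    simpa only [Function.comp_def, inv_inv, inv_div, inv_mul_eq_div] using h
  have h_div (n : ℕ) : √n / ⌊√n / c⌋₊ = (n : ℝ) / ⌊√n / c⌋₊ / √n := by
    rw [div_right_comm, Real.div_sqrt]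
  refine tendsto_of_tendsto_of_tendsto_of_le_of_le
    (by simpa using h_floor.sub tendsto_sqrt_natCast_atTop.inv_tendsto_atTop) h_floor
    (fun n ↦ ?_) fun n ↦ ?_
  · simp only [h_div, ← one_div, ← sub_div, mOf]
    gcongr
    rw [sub_le_iff_le_add, ← Nat.floor_div_eq_div (K := ℝ)]
    exact (Nat.lt_floor_add_one _).le
  · simp only [h_div, mOf]
    gcongr
    exact Nat.cast_div_le

section DivSqrt

variable {m : ℕ → ℕ} {c : ℝ}

lemma tendsto_sq_div_of_tendsto_div_sqrt (hm : Tendsto (fun n ↦ m n / √n) atTop (𝓝 c)) :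
    Tendsto (fun n ↦ (m n ^ 2 / n : ℝ)) atTop (𝓝 (c ^ 2)) := by
  simpa only [div_pow, Real.sq_sqrt (Nat.cast_nonneg _)] using hm.pow 2

lemma tendsto_div_of_tendsto_div_sqrt (hm : Tendsto (fun n ↦ m n / √n) atTop (𝓝 c)) :
    Tendsto (fun n ↦ (m n / n : ℝ)) atTop (𝓝 0) := by
  simpa [div_div, ← div_eq_mul_inv] using hm.mul tendsto_sqrt_natCast_atTop.inv_tendsto_atTop

lemma tendsto_atTop_of_tendsto_div_sqrt (hc : 0 < c)
    (hm : Tendsto (fun n ↦ m n / √n) atTop (𝓝 c)) : Tendsto m atTop atTop := by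
  refine (tendsto_natCast_atTop_iff (R := ℝ)).mp ?_
  refine (hm.pos_mul_atTop hc tendsto_sqrt_natCast_atTop).congr' ?_
  filter_upwards [eventually_gt_atTop 0] with n hn
  exact div_mul_cancel₀ _ (by positivity)

end DivSqrt

theorem IsPreAverageKernel.tendsto_sqrt_mul_variance_sum_sq_preAvg {lam : ℝ → ℝ}
    (hlam : IsPreAverageKernel ((Set.Icc 0 2).indicator lam)) {c : ℝ} (hc : 0 < c) (σ τ : ℝ)
    {m : ℕ → ℕ} (hm : Tendsto (fun n ↦ m n / √n) atTop (𝓝 c))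
    {Ω : ℕ → Type*} [∀ n, MeasureSpace (Ω n)] {W η : (n : ℕ) → ℕ → Ω n → ℝ}
    (hmodel : ∀ n, IsSimplifiedModel n (W n) (η n)) :
    Tendsto (fun n : ℕ ↦ √n * Var[fun ω ↦ ∑ i ∈ Finset.Icc 2 (m n),
        preAvg lam n (m n) (obs σ τ (W n) (η n)) i ω ^ 2; ℙ]) atTop
      (𝓝 (2 / c * (rescaledCov σ τ (c ^ 2) ((Set.Icc 0 2).indicator lam) 0 ^ 2 +
        2 * rescaledCov σ τ (c ^ 2) ((Set.Icc 0 2).indicator lam) 1 ^ 2))) := by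
  obtain ⟨K, hK⟩ := hlam.exists_abs_mul_covariance_preAvg_sub_le σ τ
  have h_sq_div := tendsto_sq_div_of_tendsto_div_sqrt hm
  have h_div := tendsto_div_of_tendsto_div_sqrt hm
  have hm_atTop := tendsto_atTop_of_tendsto_div_sqrt hc hm
  have h_error : Tendsto (fun n ↦ m n * (K * (m n / n * (1 + m n ^ 2 / n))) ^ 2) atTop (𝓝 0) := by
    have h := (h_sq_div.mul h_div).mul (((h_sq_div.const_add 1).const_mul K).pow 2)
    rw [mul_zero, zero_mul] at h
    exact h.congr fun n ↦ by ring
  have hm_good : ∀ᶠ n in atTop, 0 < m n ∧ m n ≤ n := by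
    filter_upwards [hm_atTop.eventually_gt_atTop 0, h_div.eventually_le_const one_pos,
      eventually_gt_atTop 0] with n hmn h hn
    exact ⟨hmn, by exact_mod_cast (div_le_one (by positivity)).mp h⟩
  have h_cov (p : ℝ) : Tendsto
      (fun n ↦ rescaledCov σ τ (m n ^ 2 / n) ((Set.Icc 0 2).indicator lam) p) atTop
      (𝓝 (rescaledCov σ τ (c ^ 2) ((Set.Icc 0 2).indicator lam) p)) :=
    ((h_sq_div.const_mul (τ ^ 2)).mul_const _).const_add _
  have h_band := tendsto_sum_sum_sq_div_of_band hm_atTop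
    (fun n p hp ↦ hlam.rescaledCov_eq_zero σ τ (m n ^ 2 / n) hp)
    (fun n ↦ rescaledCov_neg σ τ (m n ^ 2 / n) _) (h_cov 0) (h_cov 1) h_error
    (hm_good.mono fun n hn ↦ hK (hmodel n) hn.1 hn.2)
  refine (((hm.inv₀ hc.ne').const_mul 2).mul h_band).congr' ?_
  filter_upwards [hm_good] with n hn
  rw [(hmodel n).variance_sum_sq_preAvg σ τ lam hn.1]
  simp only [mul_pow, ← Finset.mul_sum]
  have : (m n : ℝ) ≠ 0 := by exact_mod_cast hn.1.ne'
  field_simp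

end Limit

theorem variance_sum_squared_preAveraged_obs_general (σ τ : ℝ) {c : ℝ} (hc : 0 < c)
    {lam : ℝ → ℝ} (hlam : IsPreAverageFn lam)
    {m : ℕ → ℕ} (hm : Filter.Tendsto (fun n ↦ m n / √n) Filter.atTop (nhds c))
    {Ω : ℕ → Type*} [∀ n, MeasureSpace (Ω n)] {W η : (n : ℕ) → ℕ → Ω n → ℝ}
    (hmodel : ∀ n, IsSimplifiedModel n (W n) (η n)) :
    Filter.Tendsto (fun n : ℕ ↦ √n * Var[fun ω ↦ ∑ i ∈ Finset.Icc 2 (m n),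
        preAvg lam n (m n) (obs σ τ (W n) (η n)) i ω ^ 2; ℙ])
      Filter.atTop
      (nhds ((4 / c) * (σ ^ 2 * (∫ u in (0 : ℝ)..1, bigLam lam u * bigLam lam (1 - u)) -
            τ ^ 2 * c ^ 2 * ∫ u in (0 : ℝ)..1, lam u * lam (1 - u)) ^ 2 +
          (2 / c) * (σ ^ 2 + 2 * τ ^ 2 * c ^ 2 * ∫ u in (0 : ℝ)..1, lam u ^ 2) ^ 2)) := by
  convert hlam.isPreAverageKernel.tendsto_sqrt_mul_variance_sum_sq_preAvg hc σ τ hm hmodel using 2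
  rw [rescaledCov, rescaledCov, hlam.autocorr_tailIntegral_zero, hlam.autocorr_tailIntegral_one,
    hlam.autocorr_zero, hlam.autocorr_one]
  ring

theorem variance_sum_squared_preAveraged_obs (σ τ c : ℝ) (hσ : 0 < σ) (hτ : 0 < τ) (hc : 0 < c)
    (lam : ℝ → ℝ) (hlam : IsPreAverageFn lam)
    (Ω : ℕ → Type*) [∀ n, MeasureSpace (Ω n)] [∀ n, IsProbabilityMeasure (ℙ : Measure (Ω n))]
    (W η : (n : ℕ) → ℕ → Ω n → ℝ)
    (hmodel : ∀ n, IsSimplifiedModel n (W n) (η n)) :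
    Filter.Tendsto (fun n : ℕ => Real.sqrt n *
        variance (fun ω => ∑ i ∈ Finset.Icc 2 (mOf c n),
          (preAvg lam n (mOf c n) (obs σ τ (W n) (η n)) i ω) ^ 2) ℙ)
      Filter.atTop
      (nhds ((4 / c) * (σ ^ 2 * (∫ u in (0:ℝ)..1, bigLam lam u * bigLam lam (1 - u))
              - τ ^ 2 * c ^ 2 * ∫ u in (0:ℝ)..1, lam u * lam (1 - u)) ^ 2
          + (2 / c) * (σ ^ 2 + 2 * τ ^ 2 * c ^ 2 * ∫ u in (0:ℝ)..1, (lam u) ^ 2) ^ 2)) :=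
  variance_sum_squared_preAveraged_obs_general σ τ hc hlam (tendsto_mOf_div_sqrt hc) hmodel
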